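/- Let G be a graph with vertices u, v such that N(u) = {v}, and suppose Ind(G \ Ṅ(v)) is (n−1)-connected. Then Ind(G) is n-connected. -/

import Mathlib

open SimpleGraph

/-- A claw in `G` on center `u` and leaves `v₁, v₂, v₃`. -/
def SimpleGraph.IsClaw {V : Type*} (G : SimpleGraph V) (u v₁ v₂ v₃ : V) : Prop :=
  v₁ ≠ v₂ ∧ v₁ ≠ v₃ ∧ v₂ ≠ v₃ ∧
  G.Adj u v₁ ∧ G.Adj u v₂ ∧ G.Adj u v₃ ∧
  ¬G.Adj v₁ v₂ ∧ ¬G.Adj v₁ v₃ ∧ ¬G.Adj v₂ v₃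

/-- A graph is claw-free if it has no induced claw. -/
def SimpleGraph.ClawFree {V : Type*} (G : SimpleGraph V) : Prop :=
  ∀ u v₁ v₂ v₃ : V, ¬ G.IsClaw u v₁ v₂ v₃

/-- The closed neighborhood `Ṅ(v) = N(v) ∪ {v}`. -/
def SimpleGraph.closedNbhd {V : Type*} (G : SimpleGraph V) (v : V) : Set V :=
  insert v (G.neighborSet v)

/-- The set of faces of the independence complex `Ind(G)`. -/
def indepFaces {V : Type*} (G : SimpleGraph V) : Set (Finset V) :=
  {s | ∀ a ∈ s, ∀ b ∈ s, ¬ G.Adj a b}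

/-- The geometric realization of an abstract simplicial complex with vertex set `V`. -/
def realization {V : Type*} (K : Set (Finset V)) : Type _ :=
  {f : V → ℝ // (∀ v, 0 ≤ f v) ∧ (∑ᶠ v, f v) = 1 ∧ ∃ s ∈ K, {v | f v ≠ 0} = ↑s}

instance {V : Type*} (K : Set (Finset V)) : TopologicalSpace (realization K) :=
  instTopologicalSpaceSubtype

/-- A space is `n`-connected (`n : ℤ`) if it is nonempty when `n ≥ -1` and every continuous
map from the `i`-sphere extends to the `(i+1)`-ball for all `0 ≤ i ≤ n`. -/
def IsNConnected (n : ℤ) (X : Type*) [TopologicalSpace X] : Prop :=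
  (-1 ≤ n → Nonempty X) ∧
  ∀ i : ℕ, (i : ℤ) ≤ n →
    ∀ f : C(Metric.sphere (0 : EuclideanSpace ℝ (Fin (i + 1))) 1, X),
      ∃ g : C(Metric.closedBall (0 : EuclideanSpace ℝ (Fin (i + 1))) 1, X),
        ∀ x : Metric.sphere (0 : EuclideanSpace ℝ (Fin (i + 1))) 1,
          g ⟨x.1, Metric.sphere_subset_closedBall x.2⟩ = f x

/-- Relation generating the unreduced suspension: glue `X × {0}` to a south pole and
`X × {1}` to a north pole. -/
def SuspRel (X : Type*) : X × unitInterval ⊕ Bool → X × unitInterval ⊕ Bool → Prop :=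
  fun a b => (∃ x, a = Sum.inl (x, 0) ∧ b = Sum.inr false) ∨
    (∃ x, a = Sum.inl (x, 1) ∧ b = Sum.inr true)

/-- The unreduced suspension of a space. -/
def Susp (X : Type*) [TopologicalSpace X] : Type _ := Quot (SuspRel X)

instance (X : Type*) [TopologicalSpace X] : TopologicalSpace (Susp X) :=
  instTopologicalSpaceQuot

/-- The north pole of a suspension. -/
def Susp.north (X : Type*) [TopologicalSpace X] : Susp X := Quot.mk _ (Sum.inr true)

/-- Relation generating the wedge sum of a family of pointed spaces. -/
def WedgeRel {ι : Type*} (X : ι → Type*) (pt : ∀ i, X i) :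
    (Σ i, X i) ⊕ Unit → (Σ i, X i) ⊕ Unit → Prop :=
  fun a b => ∃ i, a = Sum.inl ⟨i, pt i⟩ ∧ b = Sum.inr ()

/-- The wedge sum of a family of pointed spaces. -/
def Wedge {ι : Type*} (X : ι → Type*) [∀ i, TopologicalSpace (X i)] (pt : ∀ i, X i) :
    Type _ :=
  Quot (WedgeRel X pt)

instance {ι : Type*} (X : ι → Type*) [∀ i, TopologicalSpace (X i)] (pt : ∀ i, X i) :
    TopologicalSpace (Wedge X pt) :=
  instTopologicalSpaceQuot

/-- The graph `L^k_n`: vertices `{1, …, n}`, with `i < j` adjacent iff `j - i < k`. -/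
def lineGraphL (n k : ℕ) : SimpleGraph (Fin n) :=
  SimpleGraph.fromRel (fun i j => (i : ℕ) < j ∧ (j : ℕ) - i < k)

/-- The graph `C^k_n`: vertices `{1, …, n}`, with `i < j` adjacent iff `j - i < k` or
`(n + i) - j < k`. -/
def circGraphC (n k : ℕ) : SimpleGraph (Fin n) :=
  SimpleGraph.fromRel (fun i j => (i : ℕ) < j ∧ ((j : ℕ) - i < k ∨ (n + i) - j < k))

/-- One elementary collapse step: remove a free face `σ` together with the unique face
`τ` properly containing it (with `τ` of one dimension higher). -/
def ElemCollapse {V : Type*} (K L : Set (Finset V)) : Prop :=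
  ∃ σ τ : Finset V, σ ∈ K ∧ τ ∈ K ∧ σ ⊂ τ ∧ τ.card = σ.card + 1 ∧
    (∀ ρ ∈ K, σ ⊂ ρ → ρ = τ) ∧ L = K \ {σ, τ}

/-- `K` collapses onto `L` if there is a finite sequence of elementary collapses from
`K` to `L`. -/
def Collapses {V : Type*} (K L : Set (Finset V)) : Prop :=
  Relation.ReflTransGen ElemCollapse K L

/-!
The link of `v` in `Ind(G)` is `Ind(G \ Ṅ(v))`. The deletion of `v` is a cone with apex `u`,
because `v` is the only neighbor of `u`; hence it is contractible. In barycentric coordinates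
`Ind(G)` is covered by the open sets `{x v < 1}`, which deforms onto the deletion, and `{0 < x v}`,
which is star-shaped about the vertex `v`. Both are contractible, and their intersection is the
product of an open interval with the link, so it is `(n-1)`-connected.

A space is `n`-connected when it is covered by two `n`-connected open sets whose intersection is
`(n-1)`-connected. To extend a map from the boundary of a cube, subdivide the cube so finely that
the boundary points of each small face are all mapped into the first set or all into the second.
Then extend face by face, by increasing dimension: a face for which both sets are possible is sent
into the intersection, unless it is top-dimensional, where the connectivity of the intersection
would not suffice but that of one of the two sets does.
-/

section Extensors

variable {X Y Z : Type*} [TopologicalSpace X] [TopologicalSpace Y] [TopologicalSpace Z]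

/-- `S` is an extensor for the pair `B ⊆ D`: every continuous map from `B` to `S` extends to a
continuous map from `D` to `S`. Maps are encoded as total functions that are continuous on the
relevant set. -/
def IsExtensorFor (S : Set Z) (D B : Set X) : Prop :=
  ∀ f : X → Z, ContinuousOn f B → Set.MapsTo f B S →
    ∃ g : X → Z, ContinuousOn g D ∧ Set.MapsTo g D S ∧ Set.EqOn g f B

theorem IsExtensorFor.of_leftInvOn {S : Set Z} {D B : Set X} {D' B' : Set Y}
    (h : IsExtensorFor S D' B') {φ : X → Y} {ψ : Y → X} (hφ : ContinuousOn φ D)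
    (hφD : Set.MapsTo φ D D') (hφB : Set.MapsTo φ B B') (hψ : ContinuousOn ψ B')
    (hψB : Set.MapsTo ψ B' B) (hψφ : Set.LeftInvOn ψ φ B) : IsExtensorFor S D B := by
  intro f hf hfS
  obtain ⟨g, hg, hgS, hgf⟩ := h (f ∘ ψ) (hf.comp hψ hψB) (hfS.comp hψB)
  refine ⟨g ∘ φ, hg.comp hφ hφD, hgS.comp hφD, fun x hx ↦ ?_⟩
  rw [Function.comp_apply, hgf (hφB hx), Function.comp_apply, hψφ hx]

theorem isExtensorFor_image_homeomorph_iff (e : X ≃ₜ Y) {S : Set Z} {D B : Set X} :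
    IsExtensorFor S (e '' D) (e '' B) ↔ IsExtensorFor S D B := by
  have hsymm (A : Set X) : Set.MapsTo e.symm (e '' A) A := by
    rintro _ ⟨x, hx, rfl⟩
    simpa using hx
  exact ⟨fun h ↦ h.of_leftInvOn e.continuous.continuousOn (Set.mapsTo_image e D)
      (Set.mapsTo_image e B) e.symm.continuous.continuousOn (hsymm B)
      fun x _ ↦ e.symm_apply_apply x,
    fun h ↦ h.of_leftInvOn e.symm.continuous.continuousOn (hsymm D) (hsymm B)
      e.continuous.continuousOn (Set.mapsTo_image e B) fun y _ ↦ e.apply_symm_apply y⟩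

/-- `S` is an extensor for the closed unit ball of `ℝᵏ` and its boundary sphere. For `k = 0` the
sphere is empty. -/
def IsBallExtensor (S : Set Z) (k : ℕ) : Prop :=
  IsExtensorFor S (Metric.closedBall (0 : EuclideanSpace ℝ (Fin k)) 1) (Metric.sphere 0 1)

theorem IsNConnected.isBallExtensor {S : Set Z} {n : ℤ} (h : IsNConnected n S) {k : ℕ}
    (hk : (k : ℤ) ≤ n + 1) : IsBallExtensor S k := by
  classical
  intro f hf hfS
  cases k with
  | zero =>
    obtain ⟨z⟩ := h.1 (by push_cast at hk; lia)
    refine ⟨fun _ ↦ z, continuousOn_const, fun _ _ ↦ z.2, fun x hx ↦ ?_⟩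
    simp [Subsingleton.elim x 0] at hx
  | succ i =>
    obtain ⟨g, hgf⟩ := h.2 i (by push_cast at hk; lia) ⟨hfS.restrict, hf.mapsToRestrict hfS⟩
    let g' := fun x ↦ if hx : x ∈ Metric.closedBall 0 1 then (g ⟨x, hx⟩ : Z) else f x
    have hg' (x) (hx : x ∈ Metric.closedBall 0 1) : g' x = g ⟨x, hx⟩ := dif_pos hx
    refine ⟨g', ?_, fun x hx ↦ ?_, fun x hx ↦ ?_⟩
    · rw [continuousOn_iff_continuous_domRestrict]
      exact (continuous_subtype_val.comp g.continuous).congr fun x ↦ (hg' x x.2).symm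
    · rw [hg' x hx]
      exact (g ⟨x, hx⟩).2
    · rw [hg' x (Metric.sphere_subset_closedBall hx)]
      exact congrArg Subtype.val (hgf ⟨x, hx⟩)

theorem isNConnected_of_isBallExtensor {S : Set Z} {n : ℤ} (hne : -1 ≤ n → S.Nonempty)
    (h : ∀ k : ℕ, (k : ℤ) ≤ n + 1 → IsBallExtensor S k) : IsNConnected n S := by
  classical
  refine ⟨fun hn ↦ (hne hn).to_subtype, fun i hi f ↦ ?_⟩
  obtain ⟨z, -⟩ := hne (by lia)
  let f' := fun x ↦ if hx : x ∈ Metric.sphere 0 1 then (f ⟨x, hx⟩ : Z) else z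
  have hf' (x) (hx : x ∈ Metric.sphere 0 1) : f' x = f ⟨x, hx⟩ := dif_pos hx
  have hf'_cont : ContinuousOn f' (Metric.sphere 0 1) := by
    rw [continuousOn_iff_continuous_domRestrict]
    exact (continuous_subtype_val.comp f.continuous).congr fun x ↦ (hf' x x.2).symm
  obtain ⟨g, hg, hgS, hgf⟩ := h (i + 1) (by push_cast; lia) f' hf'_cont
    fun x hx ↦ hf' x hx ▸ (f ⟨x, hx⟩).2
  exact ⟨⟨hgS.restrict, hg.mapsToRestrict hgS⟩,
    fun x ↦ Subtype.ext ((hgf x.2).trans (hf' x x.2))⟩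

end Extensors

section Boxes

variable {ι Z : Type*} [TopologicalSpace Z] {a b : ι → ℝ}

/-- The relative boundary of the box `Set.Icc a b` inside its affine span. -/
def boxBoundary (a b : ι → ℝ) : Set (ι → ℝ) :=
  {y ∈ Set.Icc a b | ∃ j, a j < b j ∧ (y j = a j ∨ y j = b j)}

/-- The dimension of the box `Set.Icc a b`. -/
noncomputable def boxDim (a b : ι → ℝ) : ℕ :=
  {j | a j < b j}.ncard

theorem boxBoundary_subset_Icc : boxBoundary a b ⊆ Set.Icc a b :=
  Set.sep_subset _ _

theorem smul_mem_boxBoundary_smul {c : ℝ} (hc : 0 < c) {y : ι → ℝ} (hy : y ∈ boxBoundary a b) :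
    c • y ∈ boxBoundary (c • a) (c • b) := by
  obtain ⟨⟨hay, hyb⟩, j, hj, hyj⟩ := hy
  exact ⟨⟨smul_le_smul_of_nonneg_left hay hc.le, smul_le_smul_of_nonneg_left hyb hc.le⟩, j,
    mul_lt_mul_of_pos_left hj hc, hyj.imp (congrArg (c * ·)) (congrArg (c * ·))⟩

theorem interior_Icc_pi [Finite ι] (a b : ι → ℝ) :
    interior (Set.Icc a b) = Set.univ.pi fun j ↦ Set.Ioo (a j) (b j) := by
  rw [← Set.pi_univ_Icc, interior_pi_set Set.finite_univ]
  simp only [interior_Icc]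

theorem frontier_Icc_pi [Finite ι] (hab : ∀ j, a j < b j) :
    frontier (Set.Icc a b) = boxBoundary a b := by
  rw [isClosed_Icc.frontier_eq, interior_Icc_pi]
  ext y
  refine and_congr_right fun hy ↦ ?_
  simp only [Set.mem_pi, Set.mem_univ, true_imp_iff, not_forall, hab, true_and]
  exact exists_congr fun j ↦ by grind [hy.1 j, hy.2 j]

theorem exists_homeomorph_image_closedBall_eq {E F : Type*} [NormedAddCommGroup E]
    [NormedSpace ℝ E] [FiniteDimensional ℝ E] [NormedAddCommGroup F] [NormedSpace ℝ F]
    [FiniteDimensional ℝ F] (hEF : Module.finrank ℝ E = Module.finrank ℝ F) {s : Set F}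
    (hconv : Convex ℝ s) (hs : IsCompact s) (hne : (interior s).Nonempty) :
    ∃ e : E ≃ₜ F, e '' Metric.closedBall 0 1 = s ∧ e '' Metric.sphere 0 1 = frontier s := by
  let L : E ≃L[ℝ] F := ContinuousLinearEquiv.ofFinrankEq hEF
  obtain ⟨e, -, hball, hsphere⟩ :=
    exists_homeomorph_image_interior_closure_frontier_eq_unitBall (s := L ⁻¹' s)
      (hconv.linear_preimage L.toLinearEquiv.toLinearMap)
      (by
        rw [← L.coe_toHomeomorph, ← L.toHomeomorph.preimage_interior]
        exact hne.preimage L.surjective)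
      (L.toHomeomorph.isCompact_preimage.2 hs).isBounded
  rw [(hs.isClosed.preimage L.continuous).closure_eq] at hball
  rw [← L.coe_toHomeomorph, ← L.toHomeomorph.preimage_frontier] at hsphere
  refine ⟨e.symm.trans L.toHomeomorph, ?_, ?_⟩
  · rw [← hball, Set.image_image]
    simp only [Homeomorph.trans_apply, Homeomorph.symm_apply_apply]
    exact Set.image_preimage_eq s L.surjective
  · rw [← hsphere, Set.image_image]
    simp only [Homeomorph.trans_apply, Homeomorph.symm_apply_apply]
    exact Set.image_preimage_eq _ L.surjective

theorem isExtensorFor_Icc_iff_isBallExtensor [Fintype ι] (hab : ∀ j, a j < b j) {S : Set Z} :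
    IsExtensorFor S (Set.Icc a b) (boxBoundary a b) ↔ IsBallExtensor S (Fintype.card ι) := by
  have hne : (interior (Set.Icc a b)).Nonempty := by
    rw [interior_Icc_pi, Set.univ_pi_nonempty_iff]
    exact fun j ↦ Set.nonempty_Ioo.2 (hab j)
  obtain ⟨e, hball, hsphere⟩ :=
    exists_homeomorph_image_closedBall_eq (E := EuclideanSpace ℝ (Fin (Fintype.card ι)))
      (by simp) (convex_Icc a b) isCompact_Icc hne
  rw [← frontier_Icc_pi hab, ← hsphere, ← hball, isExtensorFor_image_homeomorph_iff,
    IsBallExtensor]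

/-- Forgetting the coordinates in which the box is degenerate makes it full-dimensional. -/
theorem IsBallExtensor.isExtensorFor_Icc [Finite ι] (hab : a ≤ b) {S : Set Z}
    (h : IsBallExtensor S (boxDim a b)) : IsExtensorFor S (Set.Icc a b) (boxBoundary a b) := by
  classical
  let J : Set ι := {j | a j < b j}
  have := Fintype.ofFinite J
  let φ : (ι → ℝ) → J → ℝ := fun y j ↦ y j
  let ψ : (J → ℝ) → ι → ℝ := fun z j ↦ if hj : j ∈ J then z ⟨j, hj⟩ else a j
  have hψ : Continuous ψ := continuous_pi fun j ↦ by
    by_cases hj : j ∈ J <;> simp only [ψ, hj, dite_true, dite_false] <;> fun_prop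
  have hcard : boxDim a b = Fintype.card J :=
    (Nat.card_coe_set_eq J).symm.trans Nat.card_eq_fintype_card
  have hJ : IsExtensorFor S (Set.Icc (φ a) (φ b)) (boxBoundary (φ a) (φ b)) :=
    (isExtensorFor_Icc_iff_isBallExtensor fun j ↦ j.2).2 (hcard ▸ h)
  have hφD : Set.MapsTo φ (Set.Icc a b) (Set.Icc (φ a) (φ b)) :=
    fun y hy ↦ ⟨fun j ↦ hy.1 j, fun j ↦ hy.2 j⟩
  refine hJ.of_leftInvOn (φ := φ) (ψ := ψ) (by fun_prop) hφD ?_ hψ.continuousOn ?_ ?_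
  · rintro y ⟨hy, j, hj, hyj⟩
    exact ⟨hφD hy, ⟨j, hj⟩, hj, hyj⟩
  · rintro z ⟨hz, j, hj, hzj⟩
    refine ⟨⟨fun i ↦ ?_, fun i ↦ ?_⟩, j, hj, by simpa [ψ] using hzj⟩
    · by_cases hi : i ∈ J
      · simpa [ψ, hi] using hz.1 ⟨i, hi⟩
      · simp [ψ, hi]
    · by_cases hi : i ∈ J
      · simpa [ψ, hi] using hz.2 ⟨i, hi⟩
      · simpa [ψ, hi] using hab i
  · rintro y ⟨hy, -⟩
    ext j
    by_cases hj : j ∈ J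
    · simp [ψ, φ, hj]
    · simpa [ψ, φ, hj] using (hy.1 j).antisymm ((hy.2 j).trans (not_lt.1 hj))

end Boxes

section CubicalGrid

variable {ι Z : Type*} [TopologicalSpace Z] {x y : ι → ℝ} {T W : Set (ι → ℝ)}

/-- The least corner of the face `gridFace x`. -/
noncomputable def gridFloor (x : ι → ℝ) : ι → ℝ :=
  fun j ↦ ⌊x j⌋

/-- The greatest corner of the face `gridFace x`. -/
noncomputable def gridCeil (x : ι → ℝ) : ι → ℝ :=
  fun j ↦ ⌈x j⌉

/-- The smallest closed face of the integer cubical grid that contains `x`. Every face is of this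
form, so faces are represented throughout by points of their relative interior. -/
def gridFace (x : ι → ℝ) : Set (ι → ℝ) :=
  Set.Icc (gridFloor x) (gridCeil x)

/-- The dimension of `gridFace x`. -/
noncomputable def gridDim (x : ι → ℝ) : ℕ :=
  boxDim (gridFloor x) (gridCeil x)

/-- The union of the proper faces of `gridFace x`. -/
def gridBoundary (x : ι → ℝ) : Set (ι → ℝ) :=
  {y ∈ gridFace x | gridFace y ≠ gridFace x}

/-- A set is cubical if it is a union of faces of the integer cubical grid. -/
def IsCubical (T : Set (ι → ℝ)) : Prop :=
  ∀ x ∈ T, gridFace x ⊆ T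

theorem gridFloor_le_gridCeil (x : ι → ℝ) : gridFloor x ≤ gridCeil x :=
  fun j ↦ Int.cast_le.2 (Int.floor_le_ceil (x j))

theorem mem_gridFace_self (x : ι → ℝ) : x ∈ gridFace x :=
  ⟨fun j ↦ Int.floor_le (x j), fun j ↦ Int.le_ceil (x j)⟩

theorem isCubical_Icc (a b : ι → ℤ) :
    IsCubical (Set.Icc (fun j ↦ (a j : ℝ)) fun j ↦ (b j : ℝ)) :=
  fun _ hx ↦ Set.Icc_subset_Icc (fun j ↦ Int.cast_le.2 (Int.le_floor.2 (hx.1 j)))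
    fun j ↦ Int.cast_le.2 (Int.ceil_le.2 (hx.2 j))

theorem gridFace_subset_gridFace (hy : y ∈ gridFace x) : gridFace y ⊆ gridFace x :=
  isCubical_Icc (fun j ↦ ⌊x j⌋) (fun j ↦ ⌈x j⌉) y hy

theorem gridFace_eq_gridFace_iff :
    gridFace x = gridFace y ↔ gridFloor x = gridFloor y ∧ gridCeil x = gridCeil y := by
  refine ⟨fun h ↦ ?_, fun ⟨hfloor, hceil⟩ ↦ by rw [gridFace, gridFace, hfloor, hceil]⟩
  have hxy := (Set.Icc_subset_Icc_iff (gridFloor_le_gridCeil x)).1 h.subset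
  have hyx := (Set.Icc_subset_Icc_iff (gridFloor_le_gridCeil y)).1 h.superset
  exact ⟨hyx.1.antisymm hxy.1, hxy.2.antisymm hyx.2⟩

theorem gridDim_eq_of_gridFace_eq (h : gridFace x = gridFace y) : gridDim x = gridDim y := by
  obtain ⟨hfloor, hceil⟩ := gridFace_eq_gridFace_iff.1 h
  rw [gridDim, gridDim, hfloor, hceil]

theorem gridFloor_eq_gridCeil_of_mem_boxBoundary {a b : ι → ℤ}
    (hy : y ∈ boxBoundary (fun j ↦ (a j : ℝ)) fun j ↦ (b j : ℝ)) :
    ∃ j, a j < b j ∧ gridFloor y j = gridCeil y j := by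
  obtain ⟨-, j, hj, hyj⟩ := hy
  refine ⟨j, Int.cast_lt.1 hj, ?_⟩
  rcases hyj with hyj | hyj <;> simp [gridFloor, gridCeil, hyj]

theorem gridFace_eq_of_notMem_boxBoundary (hy : y ∈ gridFace x)
    (hyb : y ∉ boxBoundary (gridFloor x) (gridCeil x)) : gridFace y = gridFace x := by
  have hcoord (j) : ⌊y j⌋ = ⌊x j⌋ ∧ ⌈y j⌉ = ⌈x j⌉ := by
    have hfloor : (⌊x j⌋ : ℝ) ≤ y j := hy.1 j
    have hceil : y j ≤ ⌈x j⌉ := hy.2 j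
    rcases (gridFloor_le_gridCeil x j).eq_or_lt with hj | hj
    · have hj : (⌊x j⌋ : ℝ) = ⌈x j⌉ := hj
      have hyj : y j = ⌈x j⌉ := by linarith
      exact ⟨by rw [hyj, Int.floor_intCast]; exact_mod_cast hj.symm, by rw [hyj, Int.ceil_intCast]⟩
    · have hne : ¬ (y j = ⌊x j⌋ ∨ y j = ⌈x j⌉) := fun h ↦ hyb ⟨hy, j, hj, h⟩
      have hle : (⌈x j⌉ : ℝ) ≤ ⌊x j⌋ + 1 := mod_cast Int.ceil_le_floor_add_one (x j)
      obtain ⟨hne_floor, hne_ceil⟩ := not_or.1 hne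
      have hlt_floor := hfloor.lt_of_ne' hne_floor
      have hlt_ceil := hceil.lt_of_ne hne_ceil
      exact ⟨Int.floor_eq_iff.2 ⟨hfloor, by linarith⟩, Int.ceil_eq_iff.2 ⟨by linarith, hceil⟩⟩
  exact gridFace_eq_gridFace_iff.2
    ⟨funext fun j ↦ congrArg _ (hcoord j).1, funext fun j ↦ congrArg _ (hcoord j).2⟩

theorem boxBoundary_gridFloor_gridCeil (x : ι → ℝ) :
    boxBoundary (gridFloor x) (gridCeil x) = gridBoundary x := by
  refine Set.Subset.antisymm (fun y hy ↦ ⟨hy.1, fun h ↦ ?_⟩) fun y hy ↦ ?_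
  · obtain ⟨j, hj, hyj⟩ := gridFloor_eq_gridCeil_of_mem_boxBoundary hy
    obtain ⟨hfloor, hceil⟩ := gridFace_eq_gridFace_iff.1 h
    rw [hfloor, hceil] at hyj
    exact hj.ne (Int.cast_injective hyj)
  · by_contra hyb
    exact hy.2 (gridFace_eq_of_notMem_boxBoundary hy.1 hyb)

theorem IsCubical.union (hT : IsCubical T) (hW : IsCubical W) : IsCubical (T ∪ W) :=
  fun x hx ↦ hx.elim (fun h ↦ (hT x h).trans Set.subset_union_left)
    fun h ↦ (hW x h).trans Set.subset_union_right

theorem isCubical_boxBoundary (a b : ι → ℤ) :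
    IsCubical (boxBoundary (fun j ↦ (a j : ℝ)) fun j ↦ (b j : ℝ)) := by
  rintro x ⟨hx, j, hj, hxj⟩ y hy
  refine ⟨isCubical_Icc a b x hx hy, j, hj, ?_⟩
  have hyj : ⌊x j⌋ ≤ y j ∧ y j ≤ ⌈x j⌉ := ⟨hy.1 j, hy.2 j⟩
  rcases hxj with hxj | hxj <;> simp only [hxj, Int.floor_intCast, Int.ceil_intCast] at hyj
  · exact .inl (hyj.2.antisymm hyj.1)
  · exact .inr (hyj.2.antisymm hyj.1)

section Finite

variable [Finite ι]

theorem gridDim_lt_of_mem_gridBoundary (hy : y ∈ gridBoundary x) : gridDim y < gridDim x := by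
  rw [← boxBoundary_gridFloor_gridCeil] at hy
  obtain ⟨j, hj, hyj⟩ := gridFloor_eq_gridCeil_of_mem_boxBoundary hy
  have hle := (Set.Icc_subset_Icc_iff (gridFloor_le_gridCeil y)).1 (gridFace_subset_gridFace hy.1)
  have hj : gridFloor x j < gridCeil x j := Int.cast_lt.2 hj
  exact Set.ncard_lt_ncard ((Set.ssubset_iff_of_subset fun i hi ↦
    (hle.1 i).trans_lt (LT.lt.trans_le hi (hle.2 i))).2 ⟨j, hj, fun h ↦ LT.lt.ne h hyj⟩)

theorem gridDim_le_of_mem_gridFace (hy : y ∈ gridFace x) : gridDim y ≤ gridDim x := by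
  by_cases h : gridFace y = gridFace x
  · exact (gridDim_eq_of_gridFace_eq h).le
  · exact (gridDim_lt_of_mem_gridBoundary ⟨hy, h⟩).le

theorem gridDim_le_card (x : ι → ℝ) : gridDim x ≤ Nat.card ι :=
  Set.ncard_le_card _

theorem IsBallExtensor.isExtensorFor_gridFace {S : Set Z} (h : IsBallExtensor S (gridDim x)) :
    IsExtensorFor S (gridFace x) (gridBoundary x) :=
  boxBoundary_gridFloor_gridCeil x ▸ h.isExtensorFor_Icc (gridFloor_le_gridCeil x)

theorem finite_image_gridFace (hT : Bornology.IsBounded T) : (gridFace '' T).Finite := by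
  obtain ⟨a, ha⟩ := hT.bddBelow
  obtain ⟨b, hb⟩ := hT.bddAbove
  have := Fintype.ofFinite ι
  classical
  refine (((Set.finite_Icc (fun j ↦ ⌊a j⌋) fun j ↦ ⌊b j⌋).prod
    (Set.finite_Icc (fun j ↦ ⌈a j⌉) fun j ↦ ⌈b j⌉)).image fun p ↦
      Set.Icc (fun j ↦ (p.1 j : ℝ)) fun j ↦ (p.2 j : ℝ)).subset ?_
  rintro _ ⟨x, hx, rfl⟩
  exact ⟨(fun j ↦ ⌊x j⌋, fun j ↦ ⌈x j⌉),
    ⟨⟨fun j ↦ Int.floor_mono (ha hx j), fun j ↦ Int.floor_mono (hb hx j)⟩,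
      fun j ↦ Int.ceil_mono (ha hx j), fun j ↦ Int.ceil_mono (hb hx j)⟩, rfl⟩

theorem continuousOn_of_forall_gridFace (hbdd : Bornology.IsBounded T) {g : (ι → ℝ) → Z}
    (hg : ∀ x ∈ T, ContinuousOn g (gridFace x)) : ContinuousOn g T := by
  have := (finite_image_gridFace hbdd).to_subtype
  have hcover : T ⊆ ⋃ F : gridFace '' T, F.1 := fun x hx ↦
    Set.mem_iUnion.2 ⟨⟨_, x, hx, rfl⟩, mem_gridFace_self x⟩
  refine ContinuousOn.mono (LocallyFinite.continuousOn_iUnion (locallyFinite_of_finite _) ?_ ?_)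
    hcover
  · rintro ⟨_, x, -, rfl⟩
    exact isClosed_Icc
  · rintro ⟨_, x, hx, rfl⟩
    exact hg x hx

/-- The extension over the faces outside `W` is glued from one chosen extension per face; `r`
picks the point that represents the face. -/
theorem exists_extension_of_gridBoundary_subset (hT : IsCubical T) (hbdd : Bornology.IsBounded T)
    (hW : IsCubical W) (hbd : ∀ x ∈ T \ W, gridBoundary x ⊆ W)
    {C : (ι → ℝ) → Set Z} (hC : ∀ x, ∀ y ∈ gridFace x, C y ⊆ C x)
    (hext : ∀ x ∈ T \ W, IsBallExtensor (C x) (gridDim x)) {f : (ι → ℝ) → Z}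
    (hf : ContinuousOn f W) (hfC : ∀ y ∈ W, f y ∈ C y) :
    ∃ g : (ι → ℝ) → Z, ContinuousOn g T ∧ (∀ y ∈ T, g y ∈ C y) ∧ Set.EqOn g f W := by
  classical
  have hface (x) (hx : x ∈ T \ W) : ∃ g, ContinuousOn g (gridFace x) ∧
      Set.MapsTo g (gridFace x) (C x) ∧ Set.EqOn g f (gridBoundary x) :=
    (hext x hx).isExtensorFor_gridFace f (hf.mono (hbd x hx)) fun y hy ↦
      hC x y hy.1 (hfC y (hbd x hx hy))
  have : Nonempty ((ι → ℝ) → Z) := ⟨f⟩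
  choose! G hGcont hGC hGf using hface
  let r := fun x ↦ Function.invFun gridFace (gridFace (ι := ι) x)
  have hr (x) : gridFace (r x) = gridFace x := Function.invFun_eq ⟨x, rfl⟩
  have hrT {x} (hx : x ∈ T \ W) : r x ∈ T \ W :=
    ⟨hT x hx.1 (hr x ▸ mem_gridFace_self (r x)),
      fun h ↦ hx.2 (hW _ h ((hr x).symm ▸ mem_gridFace_self x))⟩
  let g := fun y ↦ if y ∈ W then f y else G (r y) y
  have hgW : Set.EqOn g f W := fun y hy ↦ if_pos hy
  have hgG {x} (hx : x ∈ T \ W) : Set.EqOn g (G (r x)) (gridFace x) := by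
    intro y hy
    by_cases hyx : gridFace y = gridFace x
    · have hyW : y ∉ W := fun h ↦ hx.2 (hW y h (hyx ▸ mem_gridFace_self x))
      have hryx : r y = r x := congrArg (Function.invFun gridFace) hyx
      rw [← hryx]
      exact if_neg hyW
    · rw [hgW (hbd x hx ⟨hy, hyx⟩), hGf (r x) (hrT hx) ⟨(hr x).symm ▸ hy, (hr x).symm ▸ hyx⟩]
  refine ⟨g, continuousOn_of_forall_gridFace hbdd fun x hx ↦ ?_, fun y hy ↦ ?_, hgW⟩
  · by_cases hxW : x ∈ W
    · exact (hf.mono (hW x hxW)).congr (hgW.mono (hW x hxW))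
    · exact (hr x ▸ hGcont (r x) (hrT ⟨hx, hxW⟩)).congr (hgG ⟨hx, hxW⟩)
  · by_cases hyW : y ∈ W
    · exact hgW hyW ▸ hfC y hyW
    · rw [hgG ⟨hy, hyW⟩ (mem_gridFace_self y)]
      exact hC y (r y) (hr y ▸ mem_gridFace_self (r y))
        (hGC (r y) (hrT ⟨hy, hyW⟩) ((hr y).symm ▸ mem_gridFace_self y))

/-- `C` is a carrier: the extension maps every face into the set that `C` assigns to it. -/
theorem exists_extension_of_carrier (hT : IsCubical T) (hbdd : Bornology.IsBounded T)
    (hW : IsCubical W) (hWT : W ⊆ T) {C : (ι → ℝ) → Set Z}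
    (hC : ∀ x, ∀ y ∈ gridFace x, C y ⊆ C x)
    (hext : ∀ x ∈ T \ W, IsBallExtensor (C x) (gridDim x)) {f : (ι → ℝ) → Z}
    (hf : ContinuousOn f W) (hfC : ∀ y ∈ W, f y ∈ C y) :
    ∃ g : (ι → ℝ) → Z, ContinuousOn g T ∧ (∀ y ∈ T, g y ∈ C y) ∧ Set.EqOn g f W := by
  let skeleton (d : ℕ) : Set (ι → ℝ) := W ∪ {x ∈ T | gridDim x < d}
  have hsub (d) : skeleton d ⊆ T := Set.union_subset hWT (Set.sep_subset _ _)
  have hcubical (d) : IsCubical (skeleton d) :=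
    hW.union fun x hx y hy ↦ ⟨hT x hx.1 hy, (gridDim_le_of_mem_gridFace hy).trans_lt hx.2⟩
  have hskeleton (d) : ∃ g : (ι → ℝ) → Z, ContinuousOn g (skeleton d) ∧
      (∀ y ∈ skeleton d, g y ∈ C y) ∧ Set.EqOn g f W := by
    induction d with
    | zero => exact ⟨f, by simpa [skeleton] using hf, by simpa [skeleton] using hfC, fun _ _ ↦ rfl⟩
    | succ d ih =>
      obtain ⟨g, hg, hgC, hgf⟩ := ih
      have hbd (x) (hx : x ∈ skeleton (d + 1) \ skeleton d) : gridBoundary x ⊆ skeleton d := by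
        obtain ⟨hxW | ⟨hxT, hxd⟩, hx⟩ := hx
        · exact absurd (.inl hxW) hx
        · exact fun y hy ↦ .inr ⟨hT x hxT hy.1,
            (gridDim_lt_of_mem_gridBoundary hy).trans_le (Nat.lt_succ_iff.1 hxd)⟩
      obtain ⟨g', hg', hg'C, hg'g⟩ := exists_extension_of_gridBoundary_subset (hcubical (d + 1))
        (hbdd.subset (hsub _)) (hcubical d) hbd hC
        (fun x hx ↦ hext x ⟨hsub _ hx.1, fun h ↦ hx.2 (.inl h)⟩) hg hgC
      exact ⟨g', hg', hg'C, (hg'g.mono Set.subset_union_left).trans hgf⟩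
  obtain ⟨g, hg, hgC, hgf⟩ := hskeleton (Nat.card ι + 1)
  have htop : T ⊆ skeleton (Nat.card ι + 1) :=
    fun x hx ↦ .inr ⟨hx, Nat.lt_succ_iff.2 (gridDim_le_card x)⟩
  exact ⟨g, hg.mono htop, fun y hy ↦ hgC y (htop hy), hgf⟩

end Finite

end CubicalGrid

section OpenCover

/-- The carrier sends a face to `A ∩ B`, `A` or `B` according to which of `U` and `V` contain it,
except that full-dimensional faces inside `U ∩ V` are sent to `A`. -/
theorem exists_extension_of_gridFace_subset_or {ι X : Type*} [Finite ι] [TopologicalSpace X]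
    {A B : Set X} (hA : ∀ k ≤ Nat.card ι, IsBallExtensor A k)
    (hB : ∀ k ≤ Nat.card ι, IsBallExtensor B k)
    (hAB : ∀ k < Nat.card ι, IsBallExtensor (A ∩ B) k) {T W : Set (ι → ℝ)} (hT : IsCubical T)
    (hbdd : Bornology.IsBounded T) (hW : IsCubical W) (hWT : W ⊆ T) {U V : Set (ι → ℝ)}
    (hUV : ∀ y ∈ T, gridFace y ⊆ U ∨ gridFace y ⊆ V) {f : (ι → ℝ) → X} (hf : ContinuousOn f W)
    (hfU : Set.MapsTo f (W ∩ U) A) (hfV : Set.MapsTo f (W ∩ V) B) :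
    ∃ g : (ι → ℝ) → X, ContinuousOn g T ∧ Set.MapsTo g T (A ∪ B) ∧ Set.EqOn g f W := by
  let C (x : ι → ℝ) : Set X := {z | (gridFace x ⊆ U → z ∈ A) ∧
    (gridFace x ⊆ V → (gridFace x ⊆ U → gridDim x < Nat.card ι) → z ∈ B)}
  have hC (x) (y) (hy : y ∈ gridFace x) : C y ⊆ C x := by
    have hyx := gridFace_subset_gridFace hy
    refine fun z hz ↦
      ⟨fun hU ↦ hz.1 (hyx.trans hU), fun hV hdim ↦ hz.2 (hyx.trans hV) fun hU ↦ ?_⟩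
    by_cases hface : gridFace y = gridFace x
    · exact gridDim_eq_of_gridFace_eq hface ▸ hdim (hface ▸ hU)
    · exact (gridDim_lt_of_mem_gridBoundary ⟨hy, hface⟩).trans_le (gridDim_le_card x)
  have hext (x) (hx : x ∈ T \ W) : IsBallExtensor (C x) (gridDim x) := by
    by_cases hU : gridFace x ⊆ U
    · by_cases hV : gridFace x ⊆ V ∧ gridDim x < Nat.card ι
      · have hCx : C x = A ∩ B := by ext; simp [C, hU, hV]
        exact hCx ▸ hAB _ hV.2
      · have hCx : C x = A := by ext; simp_all [C]
        exact hCx ▸ hA _ (gridDim_le_card x)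
    · have hCx : C x = B := by ext; simp [C, hU, (hUV x hx.1).resolve_left hU]
      exact hCx ▸ hB _ (gridDim_le_card x)
  have hCAB (x) (hx : x ∈ T) : C x ⊆ A ∪ B := by
    by_cases hU : gridFace x ⊆ U
    · exact fun z hz ↦ .inl (hz.1 hU)
    · exact fun z hz ↦ .inr (hz.2 ((hUV x hx).resolve_left hU) (absurd · hU))
  obtain ⟨g, hg, hgC, hgf⟩ := exists_extension_of_carrier hT hbdd hW hWT hC hext hf fun y hy ↦
    ⟨fun hU ↦ hfU ⟨hy, hU (mem_gridFace_self y)⟩, fun hV _ ↦ hfV ⟨hy, hV (mem_gridFace_self y)⟩⟩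
  exact ⟨g, hg, fun y hy ↦ hCAB y hy (hgC y hy), hgf⟩

theorem exists_isOpen_cover_mapsTo {X Y : Type*} [TopologicalSpace X] [TopologicalSpace Y]
    {A B : Set X} (hA : IsOpen A) (hB : IsOpen B) {K : Set Y} (hK : IsClosed K) {f : Y → X}
    (hf : ContinuousOn f K) (hfAB : Set.MapsTo f K (A ∪ B)) :
    ∃ U V : Set Y, IsOpen U ∧ IsOpen V ∧ U ∪ V = Set.univ ∧
      Set.MapsTo f (K ∩ U) A ∧ Set.MapsTo f (K ∩ V) B := by
  obtain ⟨U, hU, hfU⟩ := continuousOn_iff'.1 hf A hA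
  obtain ⟨V, hV, hfV⟩ := continuousOn_iff'.1 hf B hB
  refine ⟨U ∪ Kᶜ, V ∪ Kᶜ, hU.union hK.isOpen_compl, hV.union hK.isOpen_compl, ?_, ?_, ?_⟩
  · refine Set.eq_univ_of_forall fun y ↦ ?_
    by_cases hy : y ∈ K
    · exact (hfAB hy).imp (fun h ↦ .inl (hfU.subset ⟨h, hy⟩).1)
        fun h ↦ .inl (hfV.subset ⟨h, hy⟩).1
    · exact .inl (.inr hy)
  · exact fun y hy ↦ (hfU.superset ⟨hy.2.resolve_right (not_not.2 hy.1), hy.1⟩).1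
  · exact fun y hy ↦ (hfV.superset ⟨hy.2.resolve_right (not_not.2 hy.1), hy.1⟩).1

theorem dist_le_one_of_mem_gridFace {ι : Type*} [Fintype ι] {x y : ι → ℝ} (hy : y ∈ gridFace x) :
    dist y x ≤ 1 := by
  refine (dist_pi_le_iff zero_le_one).2 fun j ↦ ?_
  have hlow : (⌊x j⌋ : ℝ) ≤ y j := hy.1 j
  have hhigh : y j ≤ ⌈x j⌉ := hy.2 j
  have hfloor := Int.lt_floor_add_one (x j)
  have hceil := Int.ceil_lt_add_one (x j)
  exact abs_sub_le_iff.2 ⟨by linarith, by linarith⟩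

theorem exists_nat_smul_mem_of_mem_gridFace {ι : Type*} [Finite ι] {U V : Set (ι → ℝ)}
    (hU : IsOpen U) (hV : IsOpen V) (hUV : U ∪ V = Set.univ) :
    ∃ N : ℕ, 0 < N ∧ ∀ y ∈ Set.Icc (0 : ι → ℝ) ((N : ℝ) • 1),
      gridFace y ⊆ ((N : ℝ)⁻¹ • ·) ⁻¹' U ∨ gridFace y ⊆ ((N : ℝ)⁻¹ • ·) ⁻¹' V := by
  have := Fintype.ofFinite ι
  obtain ⟨δ, hδ, hball⟩ := lebesgue_number_lemma_of_metric (c := (cond · U V))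
    (isCompact_Icc (a := (0 : ι → ℝ)) (b := 1)) (Bool.forall_bool.2 ⟨hV, hU⟩)
    (by rw [← Set.union_eq_iUnion, hUV]; exact Set.subset_univ _)
  obtain ⟨N, hN, hNδ⟩ := Real.exists_nat_pos_inv_lt hδ
  have hN' : (0 : ℝ) < N := Nat.cast_pos.2 hN
  refine ⟨N, hN, fun y hy ↦ ?_⟩
  have hscale : (N : ℝ)⁻¹ • y ∈ Set.Icc (0 : ι → ℝ) 1 := by
    refine ⟨smul_nonneg (by positivity) hy.1, fun j ↦ ?_⟩
    exact (inv_mul_le_one₀ hN').2 (by simpa using hy.2 j)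
  have hsmall (z) (hz : z ∈ gridFace y) : (N : ℝ)⁻¹ • z ∈ Metric.ball ((N : ℝ)⁻¹ • y) δ := by
    rw [Metric.mem_ball, dist_smul₀, Real.norm_of_nonneg (by positivity)]
    exact (mul_le_of_le_one_right (by positivity) (dist_le_one_of_mem_gridFace hz)).trans_lt hNδ
  obtain ⟨i, hi⟩ := hball _ hscale
  cases i
  · exact .inr fun z hz ↦ hi (hsmall z hz)
  · exact .inl fun z hz ↦ hi (hsmall z hz)

theorem isExtensorFor_Icc_of_isOpen_cover {ι X : Type*} [Finite ι] [TopologicalSpace X]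
    {S A B : Set X} (hA : IsOpen A) (hB : IsOpen B) (hS : S ⊆ A ∪ B)
    (hSA : ∀ k ≤ Nat.card ι, IsBallExtensor (S ∩ A) k)
    (hSB : ∀ k ≤ Nat.card ι, IsBallExtensor (S ∩ B) k)
    (hSAB : ∀ k < Nat.card ι, IsBallExtensor (S ∩ A ∩ (S ∩ B)) k) :
    IsExtensorFor S (Set.Icc (0 : ι → ℝ) 1) (boxBoundary 0 1) := by
  intro f hf hfS
  have hclosed : IsClosed (boxBoundary (0 : ι → ℝ) 1) := by
    rw [← frontier_Icc_pi (a := (0 : ι → ℝ)) (b := 1) fun _ ↦ zero_lt_one]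
    exact isClosed_frontier
  obtain ⟨U, V, hU, hV, hUV, hfU, hfV⟩ :=
    exists_isOpen_cover_mapsTo hA hB hclosed hf (hfS.mono_right hS)
  obtain ⟨N, hN, hface⟩ := exists_nat_smul_mem_of_mem_gridFace hU hV hUV
  have hN' : (0 : ℝ) < N := Nat.cast_pos.2 hN
  have hcast : ((fun _ ↦ ((0 : ℤ) : ℝ)) : ι → ℝ) = 0 := by ext; simp
  have hscale : ((fun _ ↦ ((N : ℤ) : ℝ)) : ι → ℝ) = (N : ℝ) • 1 := by ext; simp
  have hshrink : Set.MapsTo ((N : ℝ)⁻¹ • ·) (boxBoundary (0 : ι → ℝ) ((N : ℝ) • 1))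
      (boxBoundary 0 1) := fun y hy ↦ by
    simpa [smul_smul, hN'.ne'] using smul_mem_boxBoundary_smul (inv_pos.2 hN') hy
  obtain ⟨g, hg, hgS, hgf⟩ := exists_extension_of_gridFace_subset_or hSA hSB hSAB
    (hcast ▸ hscale ▸ isCubical_Icc _ _)
    (isBounded_iff_bddBelow_bddAbove.2 ⟨bddBelow_Icc, bddAbove_Icc⟩)
    (hcast ▸ hscale ▸ isCubical_boxBoundary _ _) boxBoundary_subset_Icc hface
    (hf.comp (by fun_prop) hshrink)
    (fun y hy ↦ ⟨hfS (hshrink hy.1), hfU ⟨hshrink hy.1, hy.2⟩⟩)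
    (fun y hy ↦ ⟨hfS (hshrink hy.1), hfV ⟨hshrink hy.1, hy.2⟩⟩)
  have hexpand : Set.MapsTo ((N : ℝ) • ·) (Set.Icc (0 : ι → ℝ) 1)
      (Set.Icc 0 ((N : ℝ) • 1)) := fun y hy ↦
    ⟨smul_nonneg hN'.le hy.1, smul_le_smul_of_nonneg_left hy.2 hN'.le⟩
  refine ⟨g ∘ ((N : ℝ) • ·), hg.comp (by fun_prop) hexpand,
    fun y hy ↦ (hgS (hexpand hy)).elim And.left And.left, fun y hy ↦ ?_⟩
  have hNy : (N : ℝ) • y ∈ boxBoundary 0 ((N : ℝ) • 1) := by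
    simpa using smul_mem_boxBoundary_smul hN' hy
  simpa [smul_smul, hN'.ne'] using hgf hNy

theorem IsNConnected.of_isOpen_cover {X : Type*} [TopologicalSpace X] {S A B : Set X}
    (hA : IsOpen A) (hB : IsOpen B) (hS : S ⊆ A ∪ B) {n : ℤ}
    (hnA : IsNConnected n (S ∩ A : Set X)) (hnB : IsNConnected n (S ∩ B : Set X))
    (hnAB : IsNConnected (n - 1) (S ∩ (A ∩ B) : Set X)) : IsNConnected n S := by
  rw [Set.inter_inter_distrib_left] at hnAB
  refine isNConnected_of_isBallExtensor
    (fun hn ↦ (Set.nonempty_coe_sort.1 (hnA.1 hn)).left) fun k hk ↦ ?_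
  rw [← Fintype.card_fin k, ← isExtensorFor_Icc_iff_isBallExtensor
    (a := (0 : Fin k → ℝ)) (b := 1) fun _ ↦ zero_lt_one]
  refine isExtensorFor_Icc_of_isOpen_cover hA hB hS (fun i hi ↦ hnA.isBallExtensor ?_)
    (fun i hi ↦ hnB.isBallExtensor ?_) fun i hi ↦ hnAB.isBallExtensor ?_
  all_goals
    rw [Nat.card_fin] at hi
    lia

end OpenCover

section Connectivity

variable {X Y : Type*} [TopologicalSpace X] [TopologicalSpace Y]

theorem IsNConnected.of_leftInverse {n : ℤ} (h : IsNConnected n X) {r : C(X, Y)} {s : C(Y, X)}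
    (hrs : Function.LeftInverse r s) : IsNConnected n Y := by
  refine ⟨fun hn ↦ (h.1 hn).map r, fun i hi f ↦ ?_⟩
  obtain ⟨g, hg⟩ := h.2 i hi (s.comp f)
  exact ⟨r.comp g, fun x ↦ (congrArg r (hg x)).trans (hrs (f x))⟩

theorem IsNConnected.of_homeomorph {n : ℤ} (h : IsNConnected n X) (e : X ≃ₜ Y) :
    IsNConnected n Y :=
  h.of_leftInverse (r := e) (s := e.symm) e.apply_symm_apply

theorem IsNConnected.prod {n : ℤ} (hX : IsNConnected n X) (hY : IsNConnected n Y) :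
    IsNConnected n (X × Y) := by
  refine ⟨fun hn ↦ ?_, fun i hi f ↦ ?_⟩
  · have := hX.1 hn
    have := hY.1 hn
    infer_instance
  · obtain ⟨g, hg⟩ := hX.2 i hi (ContinuousMap.fst.comp f)
    obtain ⟨g', hg'⟩ := hY.2 i hi (ContinuousMap.snd.comp f)
    exact ⟨g.prodMk g', fun x ↦ Prod.ext (hg x) (hg' x)⟩

section UnitBall

variable {E : Type*} [NormedAddCommGroup E] [NormedSpace ℝ E]

/-- Polar coordinates on the closed unit ball. -/
def radialMap (E : Type*) [NormedAddCommGroup E] [NormedSpace ℝ E] :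
    C(unitInterval × Metric.sphere (0 : E) 1, Metric.closedBall (0 : E) 1) where
  toFun p := ⟨(p.1 : ℝ) • (p.2 : E), by simp [norm_smul, abs_of_nonneg p.1.2.1, p.1.2.2]⟩

theorem norm_radialMap (p : unitInterval × Metric.sphere (0 : E) 1) :
    ‖(radialMap E p : E)‖ = p.1 := by
  simp [radialMap, norm_smul, abs_of_nonneg p.1.2.1]

theorem isQuotientMap_radialMap [FiniteDimensional ℝ E] [Nontrivial E] :
    Topology.IsQuotientMap (radialMap E) := by
  have : CompactSpace (Metric.sphere (0 : E) 1) :=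
    have := FiniteDimensional.proper_real E
    inferInstance
  refine .of_surjective_continuous (fun x ↦ ?_) (radialMap E).continuous
  obtain ⟨z, hz⟩ : ∃ z : Metric.sphere (0 : E) 1, ‖(x : E)‖ • (z : E) = x := by
    by_cases hx : (x : E) = 0
    · obtain ⟨z, hz⟩ := NormedSpace.sphere_nonempty (x := (0 : E)).2 zero_le_one
      exact ⟨⟨z, hz⟩, by simp [hx]⟩
    · exact ⟨⟨‖(x : E)‖⁻¹ • x, by simp [norm_smul, hx]⟩, by simp [smul_smul, hx]⟩
  exact ⟨(⟨‖(x : E)‖, norm_nonneg _, mem_closedBall_zero_iff.1 x.2⟩, z), Subtype.ext hz⟩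

theorem exists_extension_closedBall_of_nullhomotopic [FiniteDimensional ℝ E] [Nontrivial E]
    {f : C(Metric.sphere (0 : E) 1, X)} (hf : f.Nullhomotopic) :
    ∃ g : C(Metric.closedBall (0 : E) 1, X),
      ∀ x : Metric.sphere (0 : E) 1, g ⟨x, Metric.sphere_subset_closedBall x.2⟩ = f x := by
  obtain ⟨y, ⟨H⟩⟩ := hf
  have hfactor : Function.FactorsThrough H.symm (radialMap E) := by
    rintro ⟨t, z⟩ ⟨t', z'⟩ h
    obtain rfl : t = t' := Subtype.ext <| by
      rw [← norm_radialMap (t, z), h, norm_radialMap]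
    by_cases ht : t = 0
    · simp [ht]
    · have hz : z = z' := Subtype.ext (smul_right_injective E (fun h ↦ ht (Subtype.ext h))
        (congrArg Subtype.val h))
      rw [hz]
  refine ⟨isQuotientMap_radialMap.lift H.symm.toContinuousMap hfactor, fun z ↦ ?_⟩
  have hz : radialMap E (1, z) = ⟨z, Metric.sphere_subset_closedBall z.2⟩ :=
    Subtype.ext (one_smul ℝ _)
  rw [← hz]
  exact (DFunLike.congr_fun (isQuotientMap_radialMap.lift_comp _ hfactor) (1, z)).trans (by simp)

end UnitBall

theorem IsNConnected.of_contractibleSpace [ContractibleSpace X] (n : ℤ) : IsNConnected n X :=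
  ⟨fun _ ↦ inferInstance, fun _ _ f ↦
    exists_extension_closedBall_of_nullhomotopic ((id_nullhomotopic X).comp_left f)⟩

theorem homotopic_of_segment_subset {E : Type*} [AddCommGroup E] [TopologicalSpace E]
    [IsTopologicalAddGroup E] [Module ℝ E] [ContinuousSMul ℝ E] {S : Set E} {f g : C(X, S)}
    (h : ∀ x, segment ℝ (f x : E) (g x) ⊆ S) : f.Homotopic g := by
  let j : C(S, E) := ⟨Subtype.val, continuous_subtype_val⟩
  let H := ContinuousMap.Homotopy.affine (j.comp f) (j.comp g)
  have hH (p) : H p ∈ S := h p.2 <| by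
    rw [segment_eq_image_lineMap]
    exact ⟨p.1, p.1.2, rfl⟩
  exact ⟨⟨⟨fun p ↦ ⟨H p, hH p⟩, H.continuous.subtype_mk hH⟩,
    fun x ↦ Subtype.ext (H.map_zero_left x), fun x ↦ Subtype.ext (H.map_one_left x)⟩⟩

end Connectivity

section Polyhedra

variable {V : Type*} {K : Set (Finset V)} {s t : Finset V} {x y : V → ℝ} {u v : V}

/-- The closed simplex in `ℝ^V` spanned by the coordinate vectors of the vertices in `s`; it is
empty for `s = ∅`. -/
def closedSimplex (s : Finset V) : Set (V → ℝ) :=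
  {x | (∀ w, 0 ≤ x w) ∧ (∀ w ∉ s, x w = 0) ∧ ∑ w ∈ s, x w = 1}

/-- The union of the simplices of `K`, which models the geometric realization as a subspace of
`ℝ^V`. -/
def polyhedron (K : Set (Finset V)) : Set (V → ℝ) :=
  ⋃ s ∈ K, closedSimplex s

theorem mem_polyhedron : x ∈ polyhedron K ↔ ∃ s ∈ K, x ∈ closedSimplex s := by
  simp only [polyhedron, Set.mem_iUnion₂, exists_prop]

theorem convex_closedSimplex (s : Finset V) : Convex ℝ (closedSimplex s) := by
  rintro x ⟨hx0, hxs, hx1⟩ y ⟨hy0, hys, hy1⟩ a b ha hb hab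
  refine ⟨fun w ↦ add_nonneg (mul_nonneg ha (hx0 w)) (mul_nonneg hb (hy0 w)),
    fun w hw ↦ by simp [hxs w hw, hys w hw], ?_⟩
  simp [Finset.sum_add_distrib, ← Finset.mul_sum, hx1, hy1, hab]

theorem closedSimplex_mono (hst : s ⊆ t) : closedSimplex s ⊆ closedSimplex t :=
  fun _ ⟨hx0, hxs, hx1⟩ ↦ ⟨hx0, fun w hw ↦ hxs w fun h ↦ hw (hst h),
    (Finset.sum_subset hst fun w _ hw ↦ hxs w hw).symm.trans hx1⟩

theorem mem_of_pos_of_mem_closedSimplex (hx : x ∈ closedSimplex s) (hv : 0 < x v) : v ∈ s :=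
  not_not.1 fun h ↦ hv.ne' (hx.2.1 v h)

theorem apply_eq_zero_of_mem_polyhedron (hK : ∀ s ∈ K, v ∉ s) (hx : x ∈ polyhedron K) :
    x v = 0 := by
  obtain ⟨s, hs, hxs⟩ := mem_polyhedron.1 hx
  exact hxs.2.1 v (hK s hs)

theorem coe_realization_eq_polyhedron (hK : IsLowerSet K) :
    {x : V → ℝ | (∀ w, 0 ≤ x w) ∧ ∑ᶠ w, x w = 1 ∧ ∃ s ∈ K, {w | x w ≠ 0} = ↑s} =
      polyhedron K := by
  ext x
  rw [mem_polyhedron]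
  constructor
  · rintro ⟨hx0, hx1, s, hs, hxs⟩
    exact ⟨s, hs, hx0, fun w hw ↦ not_not.1 fun h ↦ hw (hxs.subset h),
      (finsum_eq_sum_of_support_subset x hxs.subset).symm.trans hx1⟩
  · classical
    rintro ⟨s, hs, hx0, hxs, hx1⟩
    have hsupp : Function.support x ⊆ s := fun w hw ↦ not_not.1 fun h ↦ hw (hxs w h)
    refine ⟨hx0, (finsum_eq_sum_of_support_subset x hsupp).trans hx1, s.filter (x · ≠ 0),
      hK (Finset.filter_subset _ s) hs, ?_⟩
    ext w
    simpa using fun h ↦ hsupp h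

/-- The realization of a simplicial complex as a subspace of `ℝ^V`. -/
def realizationHomeomorphPolyhedron (hK : IsLowerSet K) : realization K ≃ₜ polyhedron K :=
  Homeomorph.setCongr (coe_realization_eq_polyhedron hK)

theorem single_mem_closedSimplex [DecidableEq V] (hv : v ∈ s) :
    Pi.single v 1 ∈ closedSimplex s :=
  ⟨fun w ↦ (Pi.single_nonneg.2 zero_le_one : (0 : V → ℝ) ≤ Pi.single v 1) w,
    fun w hw ↦ Pi.single_eq_of_ne (ne_of_mem_of_not_mem hv hw).symm 1,
    by simp [hv]⟩

theorem contractibleSpace_polyhedron_inter_pos (hv : {v} ∈ K) :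
    ContractibleSpace (polyhedron K ∩ {x | 0 < x v} : Set (V → ℝ)) := by
  classical
  have hstar : StarConvex ℝ (Pi.single v 1) (polyhedron K ∩ {x | 0 < x v}) := by
    rintro x ⟨hx, hxv⟩
    obtain ⟨s, hs, hxs⟩ := mem_polyhedron.1 hx
    have hconv : Convex ℝ (closedSimplex s ∩ {x | 0 < x v}) := (convex_closedSimplex s).inter
      ((convex_Ioi 0).linear_preimage (LinearMap.proj v : (V → ℝ) →ₗ[ℝ] ℝ))
    have hvs := single_mem_closedSimplex (mem_of_pos_of_mem_closedSimplex hxs hxv)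
    intro a b ha hb hab
    exact Set.inter_subset_inter_left _ (Set.subset_biUnion_of_mem hs)
      (hconv ⟨hvs, by simp⟩ ⟨hxs, hxv⟩ ha hb hab)
  exact hstar.contractibleSpace ⟨_, mem_polyhedron.2
    ⟨_, hv, single_mem_closedSimplex (Finset.mem_singleton_self v)⟩, by simp⟩

section Map

variable {W : Type*} {L : Set (Finset W)} (e : W ↪ V)

theorem comp_mem_closedSimplex {s : Finset W} (hx : x ∈ closedSimplex (s.map e)) :
    x ∘ e ∈ closedSimplex s :=
  ⟨fun w ↦ hx.1 (e w), fun w hw ↦ hx.2.1 (e w) (by simpa using hw),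
    (Finset.sum_map s e x).symm.trans hx.2.2⟩

theorem extend_mem_closedSimplex {s : Finset W} {x : W → ℝ} (hx : x ∈ closedSimplex s) :
    Function.extend e x 0 ∈ closedSimplex (s.map e) := by
  obtain ⟨hx0, hxs, hx1⟩ := hx
  refine ⟨fun a ↦ ?_, fun a ha ↦ ?_, ?_⟩
  · by_cases h : ∃ w, e w = a
    · obtain ⟨w, rfl⟩ := h
      simpa [e.injective.extend_apply] using hx0 w
    · simp [Function.extend_apply' _ _ _ h]
  · by_cases h : ∃ w, e w = a
    · obtain ⟨w, rfl⟩ := h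
      simpa [e.injective.extend_apply] using hxs w (by simpa using ha)
    · simp [Function.extend_apply' _ _ _ h]
  · simpa [e.injective.extend_apply] using hx1

theorem extend_comp_of_mem_closedSimplex {s : Finset W} (hx : x ∈ closedSimplex (s.map e)) :
    Function.extend e (x ∘ e) 0 = x := by
  ext a
  by_cases h : ∃ w, e w = a
  · obtain ⟨w, rfl⟩ := h
    simp [e.injective.extend_apply]
  · rw [Function.extend_apply' _ _ _ h, hx.2.1 a (by simpa using fun w _ h' ↦ h ⟨w, h'⟩)]
    rfl

theorem continuous_extend_zero : Continuous fun x : W → ℝ ↦ Function.extend e x 0 := by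
  refine continuous_pi fun a ↦ ?_
  by_cases h : ∃ w, e w = a
  · obtain ⟨w, rfl⟩ := h
    simpa only [e.injective.extend_apply] using continuous_apply w
  · simpa only [Function.extend_apply' _ _ _ h] using continuous_const

theorem extend_mem_polyhedron {x : W → ℝ} (hx : x ∈ polyhedron L) :
    Function.extend e x 0 ∈ polyhedron (Finset.map e '' L) := by
  obtain ⟨s, hs, hxs⟩ := mem_polyhedron.1 hx
  exact mem_polyhedron.2 ⟨_, ⟨s, hs, rfl⟩, extend_mem_closedSimplex e hxs⟩

theorem comp_mem_polyhedron (hx : x ∈ polyhedron (Finset.map e '' L)) :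
    x ∘ e ∈ polyhedron L := by
  obtain ⟨_, ⟨s, hs, rfl⟩, hxs⟩ := mem_polyhedron.1 hx
  exact mem_polyhedron.2 ⟨s, hs, comp_mem_closedSimplex e hxs⟩

/-- An embedding of the vertices identifies the realization of a complex with the realization of
its image. -/
noncomputable def polyhedronMapHomeomorph (L : Set (Finset W)) :
    polyhedron L ≃ₜ polyhedron (Finset.map e '' L) where
  toFun x := ⟨Function.extend e x 0, extend_mem_polyhedron e x.2⟩
  invFun x := ⟨x ∘ e, comp_mem_polyhedron e x.2⟩
  left_inv x := Subtype.ext (Function.extend_comp e.injective _ _)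
  right_inv x := by
    obtain ⟨_, ⟨s, -, rfl⟩, hxs⟩ := mem_polyhedron.1 x.2
    exact Subtype.ext (extend_comp_of_mem_closedSimplex e hxs)
  continuous_toFun := ((continuous_extend_zero e).comp continuous_subtype_val).subtype_mk _
  continuous_invFun :=
    have hcomp : Continuous fun x : V → ℝ ↦ x ∘ e := by fun_prop
    (hcomp.comp continuous_subtype_val).subtype_mk _

end Map

section LinkDeletion

variable [DecidableEq V]

/-- The subcomplex of the faces that avoid the vertex `v`. -/
def deletion (K : Set (Finset V)) (v : V) : Set (Finset V) :=
  {s ∈ K | v ∉ s}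

/-- The link of the vertex `v`. -/
def link (K : Set (Finset V)) (v : V) : Set (Finset V) :=
  {s | v ∉ s ∧ insert v s ∈ K}

theorem contractibleSpace_polyhedron_of_insert_mem (hK : K.Nonempty)
    (hu : ∀ s ∈ K, insert u s ∈ K) : ContractibleSpace (polyhedron K) := by
  have hstar : StarConvex ℝ (Pi.single u 1) (polyhedron K) := by
    intro x hx
    obtain ⟨s, hs, hxs⟩ := mem_polyhedron.1 hx
    intro a b ha hb hab
    exact mem_polyhedron.2 ⟨_, hu s hs, convex_closedSimplex _
      (single_mem_closedSimplex (Finset.mem_insert_self u s))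
      (closedSimplex_mono (Finset.subset_insert u s) hxs) ha hb hab⟩
  obtain ⟨s, hs⟩ := hK
  exact hstar.contractibleSpace
    ⟨_, mem_polyhedron.2 ⟨_, hu s hs, single_mem_closedSimplex (Finset.mem_insert_self u s)⟩⟩

/-- The radial projection from the vertex `v` onto the hyperplane `x v = 0`; junk where
`x v = 1`. -/
noncomputable def projAwayFrom (v : V) (x : V → ℝ) : V → ℝ :=
  (1 - x v)⁻¹ • Function.update x v 0

theorem continuousOn_projAwayFrom (v : V) : ContinuousOn (projAwayFrom v) {x | x v < 1} := by
  have hupdate : Continuous fun x : V → ℝ ↦ Function.update x v 0 :=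
    continuous_id.update v continuous_const
  have hcoord : Continuous fun x : V → ℝ ↦ 1 - x v := by fun_prop
  exact (hcoord.continuousOn.inv₀ fun x hx ↦ (sub_pos.2 hx).ne').smul hupdate.continuousOn

theorem projAwayFrom_eq_self (hx : x v = 0) : projAwayFrom v x = x := by
  rw [projAwayFrom, ← hx, Function.update_eq_self, hx, sub_zero, inv_one, one_smul]

theorem smul_single_add_smul_projAwayFrom (hx : x v < 1) :
    x v • Pi.single v 1 + (1 - x v) • projAwayFrom v x = x := by
  rw [projAwayFrom, smul_inv_smul₀ (sub_pos.2 hx).ne']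
  ext w
  by_cases hw : w = v
  · subst hw
    simp
  · simp [hw]

theorem projAwayFrom_mem_closedSimplex (hx : x ∈ closedSimplex s) (hxv : x v < 1) :
    projAwayFrom v x ∈ closedSimplex (s.erase v) := by
  have hpos : 0 < 1 - x v := sub_pos.2 hxv
  have hsum : ∑ w ∈ s.erase v, x w = 1 - x v := by
    by_cases hv : v ∈ s
    · rw [Finset.sum_erase_eq_sub hv, hx.2.2]
    · rw [Finset.erase_eq_of_notMem hv, hx.2.2, hx.2.1 v hv, sub_zero]
  refine ⟨fun w ↦ mul_nonneg (inv_nonneg.2 hpos.le) ?_, fun w hw ↦ ?_, ?_⟩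
  · by_cases hw : w = v <;> simp [hw, hx.1 w]
  · by_cases hwv : w = v
    · simp [projAwayFrom, hwv]
    · simp [projAwayFrom, hwv, hx.2.1 w (by simpa [hwv] using hw)]
  · simp only [projAwayFrom, Pi.smul_apply, smul_eq_mul, ← Finset.mul_sum,
      Finset.sum_update_of_notMem (Finset.notMem_erase v s), hsum]
    exact inv_mul_cancel₀ hpos.ne'

theorem projAwayFrom_mem_polyhedron_deletion (hK : IsLowerSet K) (hx : x ∈ polyhedron K)
    (hxv : x v < 1) : projAwayFrom v x ∈ polyhedron (deletion K v) := by
  obtain ⟨s, hs, hxs⟩ := mem_polyhedron.1 hx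
  exact mem_polyhedron.2 ⟨s.erase v, ⟨hK (Finset.erase_subset v s) hs, Finset.notMem_erase v s⟩,
    projAwayFrom_mem_closedSimplex hxs hxv⟩

theorem projAwayFrom_mem_polyhedron_link (hx : x ∈ polyhedron K) (hx0 : 0 < x v) (hx1 : x v < 1) :
    projAwayFrom v x ∈ polyhedron (link K v) := by
  obtain ⟨s, hs, hxs⟩ := mem_polyhedron.1 hx
  refine mem_polyhedron.2 ⟨s.erase v, ⟨Finset.notMem_erase v s, ?_⟩,
    projAwayFrom_mem_closedSimplex hxs hx1⟩
  rwa [Finset.insert_erase (mem_of_pos_of_mem_closedSimplex hxs hx0)]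

theorem smul_single_add_smul_mem_polyhedron (hy : y ∈ polyhedron (link K v)) {a : ℝ}
    (ha : a ∈ Set.Icc 0 1) : a • Pi.single v 1 + (1 - a) • y ∈ polyhedron K := by
  obtain ⟨s, hs, hys⟩ := mem_polyhedron.1 hy
  exact mem_polyhedron.2 ⟨insert v s, hs.2, convex_closedSimplex _
    (single_mem_closedSimplex (Finset.mem_insert_self v s))
    (closedSimplex_mono (Finset.subset_insert v s) hys) ha.1 (sub_nonneg.2 ha.2)
    (add_sub_cancel a 1)⟩

/-- Projecting away from `v` deforms the complement of the vertex `v` onto the deletion of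
`v`. -/
noncomputable def deletionHomotopyEquiv (hK : IsLowerSet K) (v : V) :
    ContinuousMap.HomotopyEquiv (polyhedron K ∩ {x | x v < 1} : Set (V → ℝ))
      (polyhedron (deletion K v)) where
  toFun := ⟨fun x ↦ ⟨projAwayFrom v x, projAwayFrom_mem_polyhedron_deletion hK x.2.1 x.2.2⟩,
    ((continuousOn_projAwayFrom v).comp_continuous continuous_subtype_val
      fun x ↦ x.2.2).subtype_mk _⟩
  invFun := ⟨fun x ↦ ⟨x, Set.biUnion_subset_biUnion_left (Set.sep_subset _ _) x.2,
      (apply_eq_zero_of_mem_polyhedron (fun _ hs ↦ hs.2) x.2).trans_lt zero_lt_one⟩,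
    continuous_subtype_val.subtype_mk _⟩
  left_inv := homotopic_of_segment_subset fun x ↦ by
    obtain ⟨s, hs, hxs⟩ := mem_polyhedron.1 x.2.1
    have hconv : Convex ℝ (closedSimplex s ∩ {x | x v < 1}) := (convex_closedSimplex s).inter
      ((convex_Iio 1).linear_preimage (LinearMap.proj v : (V → ℝ) →ₗ[ℝ] ℝ))
    have hproj := projAwayFrom_mem_closedSimplex hxs x.2.2
    have hproj1 : projAwayFrom v x v < 1 :=
      (hproj.2.1 v (Finset.notMem_erase v s)).trans_lt zero_lt_one
    exact (hconv.segment_subset ⟨closedSimplex_mono (Finset.erase_subset v s) hproj, hproj1⟩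
      ⟨hxs, x.2.2⟩).trans (Set.inter_subset_inter_left _ (Set.subset_biUnion_of_mem hs))
  right_inv := by
    convert ContinuousMap.Homotopic.refl (ContinuousMap.id (polyhedron (deletion K v))) using 1
    ext1 x
    exact Subtype.ext (projAwayFrom_eq_self
      (apply_eq_zero_of_mem_polyhedron (fun _ hs ↦ hs.2) x.2))

theorem IsNConnected.polyhedron_inter_of_link {n : ℤ}
    (h : IsNConnected n (polyhedron (link K v))) :
    IsNConnected n (polyhedron K ∩ ({x | x v < 1} ∩ {x | 0 < x v}) : Set (V → ℝ)) := by
  have hIoo : ContractibleSpace (Set.Ioo (0 : ℝ) 1) :=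
    (convex_Ioo 0 1).contractibleSpace (Set.nonempty_Ioo.2 zero_lt_one)
  let join : C(Set.Ioo (0 : ℝ) 1 × polyhedron (link K v),
      (polyhedron K ∩ ({x | x v < 1} ∩ {x | 0 < x v}) : Set (V → ℝ))) :=
    ⟨fun p ↦ ⟨(p.1 : ℝ) • Pi.single v 1 + (1 - (p.1 : ℝ)) • (p.2 : V → ℝ),
      smul_single_add_smul_mem_polyhedron p.2.2 (Set.Ioo_subset_Icc_self p.1.2), by
        simp [apply_eq_zero_of_mem_polyhedron (K := link K v) (fun _ hs ↦ hs.1) p.2.2,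
          p.1.2.1, p.1.2.2]⟩, by fun_prop⟩
  let split : C((polyhedron K ∩ ({x | x v < 1} ∩ {x | 0 < x v}) : Set (V → ℝ)),
      Set.Ioo (0 : ℝ) 1 × polyhedron (link K v)) :=
    ⟨fun x ↦ (⟨(x : V → ℝ) v, x.2.2.2, x.2.2.1⟩,
      ⟨projAwayFrom v x, projAwayFrom_mem_polyhedron_link x.2.1 x.2.2.2 x.2.2.1⟩),
      Continuous.prodMk
        (((continuous_apply v).comp continuous_subtype_val).subtype_mk _)
        (((continuousOn_projAwayFrom v).comp_continuous
        continuous_subtype_val fun x ↦ x.2.2.1).subtype_mk _)⟩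
  exact ((IsNConnected.of_contractibleSpace n).prod h).of_leftInverse (r := join) (s := split)
    fun x ↦ Subtype.ext (smul_single_add_smul_projAwayFrom x.2.2.1)

theorem IsNConnected.polyhedron_of_link (hK : IsLowerSet K) (hv : {v} ∈ K)
    [ContractibleSpace (polyhedron (deletion K v))] {n : ℤ}
    (h : IsNConnected (n - 1) (polyhedron (link K v))) : IsNConnected n (polyhedron K) := by
  have hcover : polyhedron K ⊆ {x | x v < 1} ∪ {x | 0 < x v} := fun x _ ↦
    (lt_or_ge (x v) 1).imp_right zero_lt_one.trans_le
  have := (deletionHomotopyEquiv hK v).contractibleSpace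
  have := contractibleSpace_polyhedron_inter_pos hv
  exact IsNConnected.of_isOpen_cover (isOpen_lt (continuous_apply v) continuous_const)
    (isOpen_lt continuous_const (continuous_apply v)) hcover (.of_contractibleSpace n)
    (.of_contractibleSpace n) h.polyhedron_inter_of_link

end LinkDeletion

end Polyhedra

section IndependenceComplex

variable {V : Type*} {G : SimpleGraph V} {u v : V}

theorem isLowerSet_indepFaces (G : SimpleGraph V) : IsLowerSet (indepFaces G) :=
  fun _ _ hts hs a ha b hb ↦ hs a (hts ha) b (hts hb)

theorem singleton_mem_indepFaces (G : SimpleGraph V) (v : V) : {v} ∈ indepFaces G := by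
  simp [indepFaces]

theorem insert_mem_indepFaces_iff [DecidableEq V] {s : Finset V} :
    insert v s ∈ indepFaces G ↔ s ∈ indepFaces G ∧ ∀ w ∈ s, ¬ G.Adj v w := by
  simp only [indepFaces, Set.mem_ofPred_eq, Finset.forall_mem_insert, G.irrefl, not_false_eq_true,
    true_and, forall_and]
  grind [G.adj_comm]

theorem map_mem_indepFaces_iff {S : Set V} {s : Finset S} :
    s.map (Function.Embedding.subtype _) ∈ indepFaces G ↔ s ∈ indepFaces (G.induce S) := by
  simp [indepFaces]

theorem image_map_indepFaces_induce (G : SimpleGraph V) (S : Set V) :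
    Finset.map (Function.Embedding.subtype _) '' indepFaces (G.induce S) =
      {s ∈ indepFaces G | (s : Set V) ⊆ S} := by
  classical
  ext s
  constructor
  · rintro ⟨t, ht, rfl⟩
    exact ⟨map_mem_indepFaces_iff.2 ht, by simp⟩
  · rintro ⟨hs, hsS⟩
    have hmap : (s.subtype (· ∈ S)).map (Function.Embedding.subtype _) = s :=
      Finset.subtype_map_of_mem hsS
    exact ⟨_, map_mem_indepFaces_iff.1 (hmap.symm ▸ hs), hmap⟩

theorem link_indepFaces [DecidableEq V] (G : SimpleGraph V) (v : V) :
    link (indepFaces G) v =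
      Finset.map (Function.Embedding.subtype _) '' indepFaces (G.induce (G.closedNbhd v)ᶜ) := by
  rw [image_map_indepFaces_induce]
  ext s
  simp only [link, insert_mem_indepFaces_iff, closedNbhd, Set.mem_ofPred_eq, Set.subset_def,
    Finset.mem_coe, Set.mem_compl_iff, Set.mem_insert_iff, mem_neighborSet]
  grind

theorem insert_mem_deletion_indepFaces [DecidableEq V] (huv : G.neighborSet u = {v})
    {s : Finset V} (hs : s ∈ deletion (indepFaces G) v) :
    insert u s ∈ deletion (indepFaces G) v := by
  have hadj (w) : G.Adj u w ↔ w = v := by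
    rw [← mem_neighborSet, huv, Set.mem_singleton_iff]
  have hvu : v ≠ u := ((hadj v).2 rfl).ne'
  refine ⟨insert_mem_indepFaces_iff.2 ⟨hs.1, fun w hw h ↦ hs.2 ?_⟩, ?_⟩
  · rwa [← (hadj w).1 h]
  · simp [hvu, hs.2]

theorem contractibleSpace_polyhedron_deletion_indepFaces (huv : G.neighborSet u = {v}) :
    ContractibleSpace (polyhedron (deletion (indepFaces G) v)) := by
  classical
  exact contractibleSpace_polyhedron_of_insert_mem
    ⟨∅, isLowerSet_indepFaces G (Finset.empty_subset {v}) (singleton_mem_indepFaces G v),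
      Finset.notMem_empty v⟩
    fun _ ↦ insert_mem_deletion_indepFaces huv

theorem nonempty_homeomorph_polyhedron_link_indepFaces [DecidableEq V] (G : SimpleGraph V) (v : V) :
    Nonempty (realization (indepFaces (G.induce (G.closedNbhd v)ᶜ)) ≃ₜ
      polyhedron (link (indepFaces G) v)) := by
  rw [link_indepFaces]
  exact ⟨(realizationHomeomorphPolyhedron (isLowerSet_indepFaces _)).trans
    (polyhedronMapHomeomorph _ _)⟩

theorem indComplex_nconnected_of_pendant_general (G : SimpleGraph V)
    (huv : G.neighborSet u = {v}) {n : ℤ}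
    (h : IsNConnected (n - 1) (realization (indepFaces (G.induce (G.closedNbhd v)ᶜ)))) :
    IsNConnected n (realization (indepFaces G)) := by
  classical
  have := contractibleSpace_polyhedron_deletion_indepFaces huv
  obtain ⟨e⟩ := nonempty_homeomorph_polyhedron_link_indepFaces G v
  have hlink := h.of_homeomorph e
  have hG := IsNConnected.polyhedron_of_link (isLowerSet_indepFaces G)
    (singleton_mem_indepFaces G v) hlink
  exact hG.of_homeomorph (realizationHomeomorphPolyhedron (isLowerSet_indepFaces G)).symm

end IndependenceComplex

/-- If `N(u) = {v}` and `Ind(G \ Ṅ(v))` is `(n-1)`-connected, then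
`Ind(G)` is `n`-connected. -/
theorem indComplex_nconnected_of_pendant {V : Type*} [Fintype V]
    (G : SimpleGraph V) (u v : V) (huv : G.neighborSet u = {v}) (n : ℤ)
    (h : IsNConnected (n - 1) (realization (indepFaces (G.induce (G.closedNbhd v)ᶜ)))) :
    IsNConnected n (realization (indepFaces G)) :=
  indComplex_nconnected_of_pendant_general G huv h
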